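/- Let K be a field and let W be a four-dimensional K-vector space. For an invertible linear automorphism g of W, the induced automorphism ⋀²g of ⋀²W equals the identity if and only if g = c · id for some c ∈ K with c² = 1. -/

import Mathlib

open TensorProduct

set_option synthInstance.maxHeartbeats 1000000
set_option maxHeartbeats 1000000

/-- An endomorphism that fixes `⋀²M` pointwise preserves the `2 × 2` minors formed with
any two linear functionals. -/
theorem dual_minor_map_eq_of_exteriorAlgebra_map_eq {R M : Type*} [CommRing R] [AddCommGroup M]
    [Module R M] {f : M →ₗ[R] M}
    (hf : ∀ ω : ⋀[R]^2 M, ExteriorAlgebra.map f (ω : ExteriorAlgebra R M) = ω)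
    (φ ψ : Module.Dual R M) (u v : M) :
    φ (f u) * ψ (f v) - ψ (f u) * φ (f v) = φ u * ψ v - ψ u * φ v := by
  have h : exteriorPower.ιMulti R 2 (f ∘ ![u, v]) = exteriorPower.ιMulti R 2 ![u, v] := by
    apply Subtype.ext
    simpa only [exteriorPower.ιMulti_apply_coe, ExteriorAlgebra.map_apply_ιMulti] using
      hf (exteriorPower.ιMulti R 2 ![u, v])
  simpa [Matrix.det_fin_two] using
    congrArg (exteriorPower.pairingDual R M 2 (exteriorPower.ιMulti R 2 ![φ, ψ])) h

/-- A scalar endomorphism `c • id` acts on `⋀ⁿM` as multiplication by `c ^ n`. -/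
theorem exteriorAlgebra_map_eq_pow_smul {R M : Type*} [CommRing R] [AddCommGroup M]
    [Module R M] {f : M →ₗ[R] M} {c : R} (hf : ∀ w, f w = c • w) (n : ℕ) (ω : ⋀[R]^n M) :
    ExteriorAlgebra.map f (ω : ExteriorAlgebra R M) = c ^ n • (ω : ExteriorAlgebra R M) := by
  obtain ⟨ω, hω⟩ := ω
  rw [← exteriorPower.ιMulti_span_fixedDegree] at hω
  refine LinearMap.eqOn_span (f := (ExteriorAlgebra.map f).toLinearMap)
    (g := c ^ n • LinearMap.id) ?_ hω
  rintro _ ⟨m, rfl⟩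
  have hm : f ∘ m = fun i ↦ c • m i := funext fun i ↦ hf (m i)
  simp [ExteriorAlgebra.map_apply_ιMulti, hm, AlternatingMap.map_smul_univ]

/-- In dimension at least three, an endomorphism that fixes `⋀²V` pointwise maps every vector
to a multiple of itself. -/
theorem not_linearIndependent_of_exteriorAlgebra_map_eq {K V : Type*} [Field K] [AddCommGroup V]
    [Module K V] (hV : 2 < Module.finrank K V) {f : V →ₗ[K] V}
    (hf : ∀ ω : ⋀[K]^2 V, ExteriorAlgebra.map f (ω : ExteriorAlgebra K V) = ω) (v : V) :
    ¬ LinearIndependent K ![v, f v] := by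
  intro hv
  have hlt : Submodule.span K {v, f v} < ⊤ := by
    refine lt_of_le_of_ne le_top fun htop ↦ ?_
    have hle := finrank_range_le_card (R := K) ![v, f v]
    rw [Set.finrank, Matrix.range_cons_cons_empty, htop, finrank_top, Fintype.card_fin] at hle
    omega
  obtain ⟨ψ, hψ, hker⟩ := Submodule.exists_le_ker_of_lt_top _ hlt
  obtain ⟨u, hu⟩ := DFunLike.ne_iff.mp hψ
  have hψv : ψ v = 0 := hker (Submodule.subset_span (by simp))
  have hψfv : ψ (f v) = 0 := hker (Submodule.subset_span (by simp))
  have hmem : v ∉ Submodule.span K {f v} := by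
    rw [Submodule.mem_span_singleton]
    rintro ⟨a, ha⟩
    exact (linearIndependent_fin2.mp hv).2 a ha
  obtain ⟨φ, hφ, hφker⟩ := Submodule.exists_le_ker_of_notMem hmem
  have hφfv : φ (f v) = 0 := hφker (Submodule.mem_span_singleton_self _)
  have h := dual_minor_map_eq_of_exteriorAlgebra_map_eq hf φ ψ u v
  simp_all

/-- In dimension at least two, a scalar endomorphism that fixes `⋀²V` pointwise has ratio of
square one. -/
theorem sq_eq_one_of_exteriorAlgebra_map_eq {K V : Type*} [Field K] [AddCommGroup V]
    [Module K V] (hV : 1 < Module.finrank K V) {f : V →ₗ[K] V} {c : K} (hc : ∀ w, f w = c • w)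
    (hf : ∀ ω : ⋀[K]^2 V, ExteriorAlgebra.map f (ω : ExteriorAlgebra K V) = ω) :
    c ^ 2 = 1 := by
  have : Module.Finite K V := Module.finite_of_finrank_pos (by omega)
  have hpos : 0 < Module.finrank K (⋀[K]^2 V) := by
    rw [exteriorPower.finrank_eq]
    exact Nat.choose_pos hV
  have : Nontrivial (⋀[K]^2 V) := Module.nontrivial_of_finrank_pos hpos
  obtain ⟨ω, hω⟩ := exists_ne (0 : ⋀[K]^2 V)
  have h : c ^ 2 • ω = (1 : K) • ω := by
    apply Subtype.ext
    rw [one_smul, Submodule.coe_smul, ← exteriorAlgebra_map_eq_pow_smul hc, hf]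
  exact smul_left_injective K hω h

/-- for a four-dimensional vector space `W` over a field `K` and an invertible
linear automorphism `g` of `W`, the induced automorphism `⋀²g` of `⋀²W` (the restriction of
the functorial exterior algebra map) is the identity if and only if `g = c • id` for some
`c ∈ K` with `c² = 1`. -/
theorem second_exterior_power_map_eq_id_iff
    (K W : Type*) [Field K]
    [AddCommGroup W] [Module K W] [FiniteDimensional K W]
    (hW : Module.finrank K W = 4) (g : W ≃ₗ[K] W) :
    (∀ ω : ⋀[K]^2 W,
        ExteriorAlgebra.map (g : W →ₗ[K] W) (ω : ExteriorAlgebra K W) = (ω : ExteriorAlgebra K W))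
      ↔ ∃ c : K, c ^ 2 = 1 ∧ ∀ w : W, g w = c • w := by
  constructor
  · intro hg
    obtain ⟨c, hc⟩ := LinearMap.exists_eq_smul_id_of_forall_notLinearIndependent
      (not_linearIndependent_of_exteriorAlgebra_map_eq (by omega) hg)
    have hc : ∀ w, (g : W →ₗ[K] W) w = c • w := fun w ↦ by simp [hc]
    exact ⟨c, sq_eq_one_of_exteriorAlgebra_map_eq (by omega) hc hg, hc⟩
  · rintro ⟨c, hc, hg⟩ ω
    rw [exteriorAlgebra_map_eq_pow_smul (c := c) hg, hc, one_smul]
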